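/- arXiv:1401.2620 — 2 statements merged into one kernel-verified Lean document; each statement's English description precedes it below -/
import Mathlib

section
/- Let (X,μ) and (Y,ν) be σ-finite standard Borel measure spaces and let (σ^x)_{x∈X} be a family of complex Borel measures on Y such that for every measurable F ⊆ Y the function x ↦ σ^x(F) is measurable. Suppose the function x ↦ ‖σ^x‖ (total variation norm) is μ-integrable and μ-essentially bounded, with essential supremum c. Then there exists a complex measure σ on the product σ-algebra of Y × X such that σ(E) = ∫_X ( ∫_Y χ_E(y,x) dσ^x(y) ) dμ(x) for every measurable E ⊆ Y × X, and |σ|(Y × α) ≤ c·μ(α) for every measurable α ⊆ X. -/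
/-!
Write `f_E(x) = σ^x(E_x)`, where `E_x = {y | (y, x) ∈ E}`. Dynkin's π-λ theorem reduces the
measurability of `f_E` to the case of rectangles, and since `‖σ^x(A)‖ ≤ ρ^x(A)`, any countable
disjoint family of sets `E_i ⊆ Y × α` satisfies
`∑ ∫ ‖f_{E_i}‖ dμ ≤ ∫_α ρ^x(Y) dμ` (`tsum_lintegral_sliceMeasure_le`).
This single estimate gives the countable additivity of `σ(E) = ∫ f_E dμ` and, through the definition
of total variation as a supremum over finite partitions, the bound
`|σ|(Y × α) ≤ ∫_α ρ^x(Y) dμ ≤ c μ(α)`. In particular neither the measurability of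
`x ↦ ρ^x(F)` nor that of `u` in both variables is needed. Finally `τ = |σ|`, and `w` is the
Radon–Nikodym density of `σ` with respect to `|σ|`, which has modulus at most one because
`‖σ(E)‖ ≤ |σ|(E)` for all `E`.
-/

open MeasureTheory Set Function
open scoped ENNReal

/-- The value `σ^x(E_x)` of the complex measure `σ^x = u x · ρ x` on the slice
`E_x = {y | (y, x) ∈ E}`. -/
noncomputable def sliceMeasure {X Y : Type*} [MeasurableSpace Y]
    (ρ : X → Measure Y) (u : X → Y → ℂ) (E : Set (Y × X)) (x : X) : ℂ :=
  ∫ y in {y | (y, x) ∈ E}, u x y ∂ρ x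

section

variable {X Y : Type*} [MeasurableSpace Y] {ρ : X → Measure Y} {u : X → Y → ℂ}

lemma integrable_of_polar (hρ : ∀ x, IsFiniteMeasure (ρ x)) (hu : ∀ x, Measurable (u x))
    (hpolar : ∀ x, ∀ᵐ y ∂ρ x, ‖u x y‖ = 1) (x : X) : Integrable (u x) (ρ x) := by
  have := hρ x
  exact Integrable.of_bound (hu x).aestronglyMeasurable 1 ((hpolar x).mono fun y hy => hy.le)

lemma enorm_sliceMeasure_le (hpolar : ∀ x, ∀ᵐ y ∂ρ x, ‖u x y‖ = 1) (E : Set (Y × X)) (x : X) :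
    ‖sliceMeasure ρ u E x‖ₑ ≤ ρ x {y | (y, x) ∈ E} := by
  refine (enorm_integral_le_lintegral_enorm _).trans ?_
  rw [← setLIntegral_one]
  refine lintegral_mono_ae ((ae_restrict_of_ae (hpolar x)).mono fun y hy => ?_)
  rw [← ofReal_norm, hy, ENNReal.ofReal_one]

variable [MeasurableSpace X]

lemma measurableSet_slice {E : Set (Y × X)} (hE : MeasurableSet E) (x : X) :
    MeasurableSet {y | (y, x) ∈ E} :=
  measurable_prodMk_right hE

lemma hasSum_sliceMeasure {ι : Type*} [Countable ι] (hint : ∀ x, Integrable (u x) (ρ x))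
    {A : ι → Set (Y × X)} (hA : ∀ i, MeasurableSet (A i)) (hd : Pairwise (Disjoint on A)) (x : X) :
    HasSum (fun i => sliceMeasure ρ u (A i) x) (sliceMeasure ρ u (⋃ i, A i) x) := by
  have h := hasSum_integral_iUnion (μ := ρ x) (f := u x) (s := fun i => {y | (y, x) ∈ A i})
    (fun i => measurableSet_slice (hA i) x)
    (fun i j hij => (hd hij).preimage (fun y => (y, x))) (hint x).integrableOn
  have e : {y | (y, x) ∈ ⋃ i, A i} = ⋃ i, {y | (y, x) ∈ A i} := by ext; simp
  simpa only [sliceMeasure, e] using h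

/-- `x ↦ σ^x(E_x)` is measurable: rectangles generate the product σ-algebra and form a π-system. -/
lemma measurable_sliceMeasure (hint : ∀ x, Integrable (u x) (ρ x))
    (hmeas : ∀ F : Set Y, MeasurableSet F → Measurable fun x => ∫ y in F, u x y ∂ρ x)
    {E : Set (Y × X)} (hE : MeasurableSet E) : Measurable (sliceMeasure ρ u E) := by
  classical
  induction E, hE using MeasurableSpace.induction_on_inter generateFrom_prod.symm isPiSystem_prod with
  | empty =>
    have : sliceMeasure ρ u ∅ = fun _ => 0 := by
      ext x
      simp [sliceMeasure]
    rw [this]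
    exact measurable_const
  | basic t ht =>
    obtain ⟨F, hF, α, hα, rfl⟩ := ht
    have : sliceMeasure ρ u (F ×ˢ α) = α.indicator fun x => ∫ y in F, u x y ∂ρ x := by
      ext x
      by_cases hx : x ∈ α <;> simp [sliceMeasure, hx]
    rw [this]
    exact (hmeas F hF).indicator hα
  | compl t ht ih =>
    have : sliceMeasure ρ u tᶜ = fun x => (∫ y in univ, u x y ∂ρ x) - sliceMeasure ρ u t x := by
      ext x
      rw [eq_sub_iff_add_eq', setIntegral_univ]
      exact integral_add_compl (measurableSet_slice ht x) (hint x)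
    rw [this]
    exact (hmeas univ .univ).sub ih
  | iUnion A hd hA ih =>
    refine measurable_of_tendsto_metrizable
      (f := fun n x => ∑ i ∈ Finset.range n, sliceMeasure ρ u (A i) x)
      (fun n => Finset.measurable_fun_sum _ fun i _ => ih i) ?_
    rw [tendsto_pi_nhds]
    exact fun x => (hasSum_sliceMeasure hint hA hd x).tendsto_sum_nat

/-- The estimate behind both countable additivity and the total variation bound. -/
lemma tsum_lintegral_sliceMeasure_le {ι : Type*} [Countable ι] {μ : Measure X}
    (hint : ∀ x, Integrable (u x) (ρ x)) (hpolar : ∀ x, ∀ᵐ y ∂ρ x, ‖u x y‖ = 1)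
    (hmeas : ∀ F : Set Y, MeasurableSet F → Measurable fun x => ∫ y in F, u x y ∂ρ x)
    {A : ι → Set (Y × X)} (hA : ∀ i, MeasurableSet (A i)) (hd : Pairwise (Disjoint on A))
    {α : Set X} (hα : MeasurableSet α) (hAα : ∀ i, A i ⊆ univ ×ˢ α) :
    ∑' i, ∫⁻ x, ‖sliceMeasure ρ u (A i) x‖ₑ ∂μ ≤ ∫⁻ x in α, ρ x univ ∂μ := by
  rw [← lintegral_tsum fun i => (measurable_sliceMeasure hint hmeas (hA i)).enorm.aemeasurable,
    ← lintegral_indicator hα]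
  refine lintegral_mono fun x => ?_
  by_cases hx : x ∈ α
  · rw [indicator_of_mem hx]
    refine (ENNReal.tsum_le_tsum fun i => enorm_sliceMeasure_le hpolar (A i) x).trans ?_
    exact tsum_measure_le_measure_univ (fun i => (measurableSet_slice (hA i) x).nullMeasurableSet)
      fun i j hij => ((hd hij).preimage (fun y => (y, x))).aedisjoint
  · have h0 : ∀ i, {y | (y, x) ∈ A i} = ∅ := fun i =>
      eq_empty_of_forall_notMem fun y hy => hx (hAα i hy).2
    simp [sliceMeasure, h0]

lemma integrable_sliceMeasure {μ : Measure X}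
    (hint : ∀ x, Integrable (u x) (ρ x)) (hpolar : ∀ x, ∀ᵐ y ∂ρ x, ‖u x y‖ = 1)
    (hmeas : ∀ F : Set Y, MeasurableSet F → Measurable fun x => ∫ y in F, u x y ∂ρ x)
    (hfin : ∫⁻ x, ρ x univ ∂μ ≠ ∞) {E : Set (Y × X)} (hE : MeasurableSet E) :
    Integrable (sliceMeasure ρ u E) μ := by
  refine ⟨(measurable_sliceMeasure hint hmeas hE).aestronglyMeasurable, ?_⟩
  refine (lintegral_mono fun x => ?_).trans_lt hfin.lt_top
  exact (enorm_sliceMeasure_le hpolar E x).trans (measure_mono (subset_univ _))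

open Classical in
/-- The complex measure `σ(E) = ∫ σ^x(E_x) dμ(x)`, with the value `0` on non-measurable sets. -/
noncomputable def integratedMeasure (μ : Measure X)
    (hint : ∀ x, Integrable (u x) (ρ x)) (hpolar : ∀ x, ∀ᵐ y ∂ρ x, ‖u x y‖ = 1)
    (hmeas : ∀ F : Set Y, MeasurableSet F → Measurable fun x => ∫ y in F, u x y ∂ρ x)
    (hfin : ∫⁻ x, ρ x univ ∂μ ≠ ∞) : ComplexMeasure (Y × X) where
  measureOf' E := if MeasurableSet E then ∫ x, sliceMeasure ρ u E x ∂μ else 0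
  empty' := by simp [sliceMeasure]
  not_measurable' _ hE := if_neg hE
  m_iUnion' A hA hd := by
    simp only [hA, MeasurableSet.iUnion hA, if_true]
    have h := hasSum_integral_of_summable_integral_norm
      (fun i => integrable_sliceMeasure hint hpolar hmeas hfin (hA i)) ?_
    · simpa only [(hasSum_sliceMeasure hint hA hd _).tsum_eq] using h
    · simp_rw [fun i => integral_norm_eq_lintegral_enorm
        (measurable_sliceMeasure hint hmeas (hA i)).aestronglyMeasurable (μ := μ)]
      refine ENNReal.summable_toReal (ne_top_of_le_ne_top hfin ?_)
      simpa using tsum_lintegral_sliceMeasure_le (μ := μ) hint hpolar hmeas hA hd .univ (by simp)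

lemma integratedMeasure_apply {μ : Measure X}
    (hint : ∀ x, Integrable (u x) (ρ x)) (hpolar : ∀ x, ∀ᵐ y ∂ρ x, ‖u x y‖ = 1)
    (hmeas : ∀ F : Set Y, MeasurableSet F → Measurable fun x => ∫ y in F, u x y ∂ρ x)
    (hfin : ∫⁻ x, ρ x univ ∂μ ≠ ∞) {E : Set (Y × X)} (hE : MeasurableSet E) :
    integratedMeasure μ hint hpolar hmeas hfin E = ∫ x, sliceMeasure ρ u E x ∂μ :=
  if_pos hE

lemma variation_integratedMeasure_le {μ : Measure X}
    (hint : ∀ x, Integrable (u x) (ρ x)) (hpolar : ∀ x, ∀ᵐ y ∂ρ x, ‖u x y‖ = 1)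
    (hmeas : ∀ F : Set Y, MeasurableSet F → Measurable fun x => ∫ y in F, u x y ∂ρ x)
    (hfin : ∫⁻ x, ρ x univ ∂μ ≠ ∞) {α : Set X} (hα : MeasurableSet α) :
    (integratedMeasure μ hint hpolar hmeas hfin).variation (univ ×ˢ α)
      ≤ ∫⁻ x in α, ρ x univ ∂μ := by
  refine le_of_forall_lt fun a ha => ?_
  obtain ⟨P, hsub, hdis, hPm, hlt⟩ :=
    VectorMeasure.exists_lt_sum_of_lt_variation _ (MeasurableSet.univ.prod hα) ha
  refine hlt.trans_le ?_
  rw [← Finset.sum_coe_sort P, ← tsum_fintype (L := .unconditional _)]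
  refine le_trans (ENNReal.tsum_le_tsum fun p => ?_)
    (tsum_lintegral_sliceMeasure_le (A := fun p : P => (p : Set (Y × X))) hint hpolar hmeas
      (fun p => hPm p p.2) ?_ hα fun p => hsub p p.2)
  · rw [integratedMeasure_apply hint hpolar hmeas hfin (hPm p p.2)]
    exact enorm_integral_le_lintegral_enorm _
  · exact fun p q hpq => hdis p.2 q.2 (Subtype.coe_injective.ne hpq)

end

/-- Radon–Nikodym theorem for complex measures, deduced from the one for signed measures. -/
lemma setIntegral_complex_rnDeriv {Z : Type*} [MeasurableSpace Z] (σ : ComplexMeasure Z)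
    (τ : Measure Z) [SigmaFinite τ] (h : ∀ E, MeasurableSet E → τ E = 0 → σ E = 0)
    {E : Set Z} (hE : MeasurableSet E) : ∫ z in E, σ.rnDeriv τ z ∂τ = σ E := by
  have hac : σ ≪ᵥ τ.toENNRealVectorMeasure := by
    refine VectorMeasure.AbsolutelyContinuous.mk fun E hE h0 => h E hE ?_
    rwa [Measure.toENNRealVectorMeasure_apply_measurable hE] at h0
  obtain ⟨hre, him⟩ := (σ.absolutelyContinuous_ennreal_iff _).1 hac
  have hi := (σ.integrable_rnDeriv τ).integrableOn (s := E)
  have key : ∀ s : SignedMeasure Z, s ≪ᵥ τ.toENNRealVectorMeasure →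
      ∫ z in E, s.rnDeriv τ z ∂τ = s E := fun s hs => by
    rw [← withDensityᵥ_apply (s.integrable_rnDeriv τ) hE, s.withDensityᵥ_rnDeriv_eq τ hs]
  apply Complex.ext
  · rw [← RCLike.re_eq_complex_re, ← integral_re hi]
    exact key _ hre
  · rw [← RCLike.im_eq_complex_im, ← integral_im hi]
    exact key _ him

/-- A density all of whose set integrals are dominated by `τ` has modulus at most one. This is
checked by testing against the real functionals `z ↦ Re (q z)` for `q` in a countable dense set. -/
lemma ae_norm_le_one_of_setIntegral_le {Z : Type*} [MeasurableSpace Z] {τ : Measure Z}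
    [IsFiniteMeasure τ] {w : Z → ℂ} (hw : Integrable w τ)
    (h : ∀ E, MeasurableSet E → ‖∫ z in E, w z ∂τ‖ ≤ τ.real E) : ∀ᵐ z ∂τ, ‖w z‖ ≤ 1 := by
  have hq : ∀ q : ℂ, ∀ᵐ z ∂τ, (q * w z).re ≤ ‖q‖ := by
    intro q
    refine ae_le_of_forall_setIntegral_le (f := fun z => (q * w z).re) (g := fun _ => ‖q‖)
      (hw.const_mul q).re (integrable_const _) fun E hE _ => ?_
    have e : ∫ z in E, (q * w z).re ∂τ = (q * ∫ z in E, w z ∂τ).re := by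
      rw [← integral_const_mul]
      exact integral_re (hw.const_mul q).integrableOn
    rw [e, setIntegral_const, smul_eq_mul, mul_comm (τ.real E)]
    refine (Complex.re_le_norm _).trans ?_
    rw [norm_mul]
    exact mul_le_mul_of_nonneg_left (h E hE) (norm_nonneg q)
  have hall := ae_all_iff.2 fun n => hq (TopologicalSpace.denseSeq ℂ n)
  filter_upwards [hall] with z hz
  have hz' : ∀ q : ℂ, (q * w z).re ≤ ‖q‖ := fun q =>
    (TopologicalSpace.denseRange_denseSeq ℂ).induction_on q
      (isClosed_le (by fun_prop) (by fun_prop)) hz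
  -- The choice `q = conj (w z)` gives `‖w z‖ ^ 2 ≤ ‖w z‖`.
  have h1 := hz' (starRingEnd ℂ (w z))
  rw [← Complex.normSq_eq_conj_mul_self, Complex.ofReal_re, Complex.normSq_eq_norm_sq,
    RCLike.norm_conj] at h1
  nlinarith [norm_nonneg (w z)]

/-- Given a family `(σ^x)_{x∈X}` of complex Borel measures on `Y`
(encoded as `σ^x = u x · ρ x` with `ρ x` a finite positive measure and `u x` a
unimodular density, so that `‖σ^x‖ = ρ x (Y)`), measurable in `x`, with
`x ↦ ‖σ^x‖` integrable and essentially bounded by `c`, there is a complex measure `σ`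
on `Y × X` (encoded as `σ = w·τ` with `‖w‖ ≤ 1` `τ`-a.e., so that `|σ| ≤ τ`) with
`σ(E) = ∫_X ∫_Y χ_E(y,x) dσ^x(y) dμ(x)` for every measurable `E`, and
`|σ|(Y × α) ≤ c μ(α)` for every measurable `α ⊆ X`. -/
theorem stmt_12
    {X Y : Type*} [MeasurableSpace X] [StandardBorelSpace X]
    [MeasurableSpace Y] [StandardBorelSpace Y]
    (μ : Measure X) (ν : Measure Y) [SigmaFinite μ] [SigmaFinite ν]
    (ρ : X → Measure Y) (hρfin : ∀ x, IsFiniteMeasure (ρ x))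
    (u : X → Y → ℂ) (hu : ∀ x, Measurable (u x))
    (hpolar : ∀ x, ∀ᵐ y ∂ρ x, ‖u x y‖ = 1)
    (hmeas : ∀ F : Set Y, MeasurableSet F → Measurable fun x => ∫ y in F, u x y ∂ρ x)
    (hint : Integrable (fun x => ((ρ x) Set.univ).toReal) μ)
    (c : ℝ) (hc : ∀ᵐ x ∂μ, ((ρ x) Set.univ).toReal ≤ c) :
    ∃ (τ : Measure (Y × X)) (w : Y × X → ℂ),
      IsFiniteMeasure τ ∧
      (∀ᵐ p ∂τ, ‖w p‖ ≤ 1) ∧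
      (∀ E : Set (Y × X), MeasurableSet E →
        ∫ p in E, w p ∂τ
          = ∫ x, (∫ y, Set.indicator E (fun q : Y × X => u q.2 q.1) (y, x) ∂ρ x) ∂μ) ∧
      (∀ α : Set X, MeasurableSet α → τ (Set.univ ×ˢ α) ≤ ENNReal.ofReal c * μ α) := by
  have hi := integrable_of_polar hρfin hu hpolar
  have htop : ∀ x, ρ x Set.univ ≠ ∞ := fun x => (hρfin x).measure_univ_lt_top.ne
  have hfin : ∫⁻ x, ρ x Set.univ ∂μ ≠ ∞ := by
    have h := hint.lintegral_lt_top.ne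
    simpa only [ENNReal.ofReal_toReal (htop _)] using h
  set σ := integratedMeasure μ hi hpolar hmeas hfin with hσ
  have hvar : ∀ α : Set X, MeasurableSet α →
      σ.variation (Set.univ ×ˢ α) ≤ ∫⁻ x in α, ρ x Set.univ ∂μ := fun α hα =>
    variation_integratedMeasure_le hi hpolar hmeas hfin hα
  have hτ : IsFiniteMeasure σ.variation := by
    refine ⟨lt_of_le_of_lt ?_ hfin.lt_top⟩
    simpa using hvar Set.univ .univ
  have hrn : ∀ E, MeasurableSet E → ∫ p in E, σ.rnDeriv σ.variation p ∂σ.variation = σ E :=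
    fun E hE => setIntegral_complex_rnDeriv σ σ.variation (fun E _ h0 => by
      simpa [h0] using σ.enorm_measure_le_variation E) hE
  refine ⟨σ.variation, σ.rnDeriv σ.variation, hτ, ?_, fun E hE => ?_, fun α hα => ?_⟩
  · refine ae_norm_le_one_of_setIntegral_le (σ.integrable_rnDeriv _) fun E hE => ?_
    rw [hrn E hE]
    exact VectorMeasure.norm_measure_le_variation
  · rw [hrn E hE, hσ, integratedMeasure_apply hi hpolar hmeas hfin hE]
    refine integral_congr_ae (.of_forall fun x => ?_)
    exact (integral_indicator (measurableSet_slice hE x)).symm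
  · refine (hvar α hα).trans ?_
    rw [← setLIntegral_const]
    refine lintegral_mono_ae (ae_restrict_of_ae (hc.mono fun x hx => ?_))
    rw [← ENNReal.ofReal_toReal (htop x)]
    exact ENNReal.ofReal_le_ofReal hx
end

section
/- Let (X,μ) and (X₁,μ₁) be standard Borel spaces with σ-finite Borel measures and let φ : X → X₁ be a measurable map such that the pushforward measure φ_*μ is absolutely continuous with respect to μ₁, with Radon–Nikodym derivative r : X₁ → [0,∞). Set M₁ = {x₁ ∈ X₁ : r(x₁) = 0}. Then the formula (V_φ ξ)(x) = ξ(φ(x))/√(r(φ(x))) for x ∉ φ^{-1}(M₁) and (V_φ ξ)(x) = 0 for x ∈ φ^{-1}(M₁) defines a bounded linear operator V_φ : L²(X₁,μ₁) → L²(X,μ) with ‖V_φ ξ‖² = ∫_{M₁ᶜ} |ξ(x₁)|² dμ₁(x₁) for every ξ ∈ L²(X₁,μ₁); hence V_φ is a partial isometry with initial space {ξ ∈ L²(X₁,μ₁) : ξ = 0 μ₁-a.e. on M₁}. Moreover, if φ is injective up to a null set and has measurable inverse, then V_φ is surjective. -/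
open MeasureTheory

/-!
Write `w = 1 / √r` with the convention `1 / 0 = 0`, so that `V ξ = (ξ · w) ∘ φ`. Everything rests on
`lintegral_comp_div_sqrt`: by the change of variables `φ_*μ = r μ₁`, the integral of `|V ξ|²` over
`X` is that of `|ξ|² w² r` over `X₁`, and `w² r` is the indicator of `{r ≠ 0}`. This gives
membership in `L²`, the bound `‖V ξ‖ ≤ ‖ξ‖` and the norm formula, from which the two statements
about the initial space follow. `V` respects a.e. equality because `φ` is quasi-measure-preserving.

If `φ` has a measurable left inverse `ψ` off a null set, a preimage of `η` is `√r · (η ∘ ψ)`: the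
same change of variables shows that it is in `L²`, and `r ∘ φ ≠ 0` almost everywhere since
`φ_*μ` does not charge `{r = 0}`.
-/

/-- Since `φ_*μ = r μ₁` does not charge `{r = 0}`, the function `r ∘ φ` is a.e. nonzero. -/
lemma ae_density_comp_ne_zero
    {X X₁ : Type*} [MeasurableSpace X] [MeasurableSpace X₁]
    {μ : Measure X} {μ₁ : Measure X₁} {φ : X → X₁} (hφ : Measurable φ)
    {r : X₁ → ℝ} (hr_meas : Measurable r)
    (hRN : μ.map φ = μ₁.withDensity fun x₁ => ENNReal.ofReal (r x₁)) :
    ∀ᵐ x ∂μ, r (φ x) ≠ 0 := by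
  have h : ∀ᵐ y ∂(μ.map φ), r y ≠ 0 := by
    rw [hRN, ae_withDensity_iff hr_meas.ennreal_ofReal]
    refine Filter.Eventually.of_forall fun y hy h0 => hy ?_
    simp [h0]
  exact ae_of_ae_map hφ.aemeasurable h

lemma quasiMeasurePreserving_of_map_eq_withDensity
    {X X₁ : Type*} [MeasurableSpace X] [MeasurableSpace X₁]
    {μ : Measure X} {μ₁ : Measure X₁} {φ : X → X₁} (hφ : Measurable φ)
    {r : X₁ → ℝ}
    (hRN : μ.map φ = μ₁.withDensity fun x₁ => ENNReal.ofReal (r x₁)) :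
    Measure.QuasiMeasurePreserving φ μ μ₁ :=
  ⟨hφ, hRN ▸ withDensity_absolutelyContinuous _ _⟩

lemma lintegral_comp_eq_mul
    {X X₁ : Type*} [MeasurableSpace X] [MeasurableSpace X₁]
    {μ : Measure X} {μ₁ : Measure X₁} {φ : X → X₁} (hφ : Measurable φ)
    {r : X₁ → ℝ} (hr_meas : Measurable r)
    (hRN : μ.map φ = μ₁.withDensity fun x₁ => ENNReal.ofReal (r x₁))
    {g : X₁ → ENNReal} (hg : Measurable g) :
    ∫⁻ x, g (φ x) ∂μ = ∫⁻ y, ENNReal.ofReal (r y) * g y ∂μ₁ := by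
  rw [← lintegral_map hg hφ, hRN,
    lintegral_withDensity_eq_lintegral_mul _ hr_meas.ennreal_ofReal hg]
  rfl

lemma ofReal_eq_enorm_sqrt_sq {t : ℝ} (ht : 0 ≤ t) :
    ENNReal.ofReal t = ‖(Real.sqrt t : ℂ)‖ₑ ^ 2 := by
  rw [← ofReal_norm, ← ENNReal.ofReal_pow (norm_nonneg _), Complex.norm_real, Real.norm_eq_abs,
    sq_abs, Real.sq_sqrt ht]

/-- The isometry identity for `f ↦ (f / √r) ∘ φ`. The division by zero where `r ∘ φ = 0` yields `0`,
which is the value prescribed there. -/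
lemma lintegral_comp_div_sqrt
    {X X₁ : Type*} [MeasurableSpace X] [MeasurableSpace X₁]
    {μ : Measure X} {μ₁ : Measure X₁} {φ : X → X₁} (hφ : Measurable φ)
    {r : X₁ → ℝ} (hr_meas : Measurable r) (hr_nonneg : ∀ x₁, 0 ≤ r x₁)
    (hRN : μ.map φ = μ₁.withDensity fun x₁ => ENNReal.ofReal (r x₁))
    {f : X₁ → ℂ} (hf : Measurable f) :
    ∫⁻ x, ‖f (φ x) / (Real.sqrt (r (φ x)) : ℂ)‖ₑ ^ 2 ∂μ
      = ∫⁻ y in {y | r y ≠ 0}, ‖f y‖ₑ ^ 2 ∂μ₁ := by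
  have hm : Measurable fun y => ‖f y / (Real.sqrt (r y) : ℂ)‖ₑ ^ 2 := by fun_prop
  have hs : MeasurableSet {y | r y ≠ 0} := (hr_meas (measurableSet_singleton 0)).compl
  rw [lintegral_comp_eq_mul hφ hr_meas hRN hm, ← lintegral_indicator hs]
  refine lintegral_congr fun y => ?_
  by_cases h : r y = 0
  · simp [h]
  · have h0 : (Real.sqrt (r y) : ℂ) ≠ 0 := by
      exact_mod_cast (Real.sqrt_pos.2 (lt_of_le_of_ne (hr_nonneg y) (Ne.symm h))).ne'
    rw [Set.indicator_of_mem (show y ∈ {y | r y ≠ 0} from h), ofReal_eq_enorm_sqrt_sq (hr_nonneg y),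
      ← mul_pow, ← enorm_mul, mul_div_cancel₀ _ h0]

lemma eLpNorm_two_eq_lintegral {X : Type*} [MeasurableSpace X] (μ : Measure X) (f : X → ℂ) :
    eLpNorm f 2 μ = (∫⁻ x, ‖f x‖ₑ ^ 2 ∂μ) ^ (1 / 2 : ℝ) := by
  simp [eLpNorm_eq_lintegral_rpow_enorm_toReal]

/-- The same identity as `lintegral_comp_div_sqrt`, for the `L²` seminorms. -/
lemma eLpNorm_comp_div_sqrt
    {X X₁ : Type*} [MeasurableSpace X] [MeasurableSpace X₁]
    {μ : Measure X} {μ₁ : Measure X₁} {φ : X → X₁} (hφ : Measurable φ)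
    {r : X₁ → ℝ} (hr_meas : Measurable r) (hr_nonneg : ∀ x₁, 0 ≤ r x₁)
    (hRN : μ.map φ = μ₁.withDensity fun x₁ => ENNReal.ofReal (r x₁))
    {f : X₁ → ℂ} (hf : Measurable f) :
    eLpNorm (fun x => f (φ x) / (Real.sqrt (r (φ x)) : ℂ)) 2 μ
      = eLpNorm f 2 (μ₁.restrict {y | r y ≠ 0}) := by
  rw [eLpNorm_two_eq_lintegral, eLpNorm_two_eq_lintegral,
    lintegral_comp_div_sqrt hφ hr_meas hr_nonneg hRN hf]

lemma toReal_eLpNorm_two_sq {X : Type*} [MeasurableSpace X] {μ : Measure X} {f : X → ℂ}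
    (hf : MemLp f 2 μ) :
    (eLpNorm f 2 μ).toReal ^ 2 = ∫ x, ‖f x‖ ^ 2 ∂μ := by
  have h0 : 0 ≤ ∫ x, ‖f x‖ ^ 2 ∂μ := integral_nonneg fun x => by positivity
  rw [hf.eLpNorm_eq_integral_rpow_norm (by simp) (by simp), ENNReal.toReal_ofReal (by positivity)]
  simp [← Real.sqrt_eq_rpow, Real.sq_sqrt h0, ← one_div]

/-- Let `φ : X → X₁` be measurable with `φ_*μ ≪ μ₁` and
Radon–Nikodym derivative `r ≥ 0`, and `M₁ = {r = 0}`.  Then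
`V_φ ξ (x) = ξ(φ(x))/√(r(φ(x)))` off `φ⁻¹(M₁)` and `0` on it defines a bounded
operator `V_φ : L²(X₁,μ₁) → L²(X,μ)` with `‖V_φ ξ‖² = ∫_{M₁ᶜ} |ξ|² dμ₁`; hence `V_φ`
is a partial isometry with initial space `{ξ : ξ = 0 a.e. on M₁}`.  If moreover `φ` is
injective up to a null set with measurable inverse, then `V_φ` is surjective. -/
theorem stmt_14
    {X X₁ : Type*} [MeasurableSpace X] [StandardBorelSpace X]
    [MeasurableSpace X₁] [StandardBorelSpace X₁]
    (μ : Measure X) (μ₁ : Measure X₁) [SigmaFinite μ] [SigmaFinite μ₁]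
    (φ : X → X₁) (hφ : Measurable φ)
    (r : X₁ → ℝ) (hr_meas : Measurable r) (hr_nonneg : ∀ x₁, 0 ≤ r x₁)
    (hRN : μ.map φ = μ₁.withDensity fun x₁ => ENNReal.ofReal (r x₁)) :
    ∃ V : Lp ℂ 2 μ₁ →L[ℂ] Lp ℂ 2 μ,
      (∀ ξ : Lp ℂ 2 μ₁, (⇑(V ξ) : X → ℂ) =ᵐ[μ]
        fun x => if r (φ x) = 0 then 0 else ξ (φ x) / (Real.sqrt (r (φ x)) : ℂ)) ∧
      (∀ ξ : Lp ℂ 2 μ₁,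
        ‖V ξ‖ ^ 2 = ∫ x₁ in {x₁ : X₁ | r x₁ ≠ 0}, ‖ξ x₁‖ ^ 2 ∂μ₁) ∧
      (∀ ξ : Lp ℂ 2 μ₁, (∀ᵐ x₁ ∂μ₁, r x₁ = 0 → ξ x₁ = 0) → ‖V ξ‖ = ‖ξ‖) ∧
      (∀ ξ : Lp ℂ 2 μ₁, (∀ᵐ x₁ ∂μ₁, r x₁ ≠ 0 → ξ x₁ = 0) → V ξ = 0) ∧
      ((∃ Λ : Set X, MeasurableSet Λ ∧ μ Λ = 0 ∧ Set.InjOn φ Λᶜ ∧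
          MeasurableSet (φ '' Λᶜ) ∧
          ∃ ψ : X₁ → X, Measurable ψ ∧ ∀ x ∈ Λᶜ, ψ (φ x) = x) →
        Function.Surjective ⇑V) := by
  have hq := quasiMeasurePreserving_of_map_eq_withDensity hφ hRN
  have hmeas : ∀ ξ : Lp ℂ 2 μ₁, Measurable ξ := fun ξ => (Lp.stronglyMeasurable ξ).measurable
  have hmem : ∀ ξ : Lp ℂ 2 μ₁,
      MemLp (fun x => ξ (φ x) / (Real.sqrt (r (φ x)) : ℂ)) 2 μ := by
    intro ξ
    have := hmeas ξ
    refine ⟨Measurable.aestronglyMeasurable (by fun_prop), ?_⟩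
    rw [eLpNorm_comp_div_sqrt hφ hr_meas hr_nonneg hRN this]
    exact ((Lp.memLp ξ).restrict _).2
  let L : Lp ℂ 2 μ₁ →ₗ[ℂ] Lp ℂ 2 μ :=
    { toFun := fun ξ => (hmem ξ).toLp _
      map_add' := by
        intro ξ η
        rw [← MemLp.toLp_add, MemLp.toLp_eq_toLp_iff]
        filter_upwards [hq.ae (Lp.coeFn_add ξ η)] with x hx
        simp only [Pi.add_apply] at hx ⊢
        rw [hx, add_div]
      map_smul' := by
        intro c ξ
        rw [RingHom.id_apply, ← MemLp.toLp_const_smul, MemLp.toLp_eq_toLp_iff]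
        filter_upwards [hq.ae (Lp.coeFn_smul c ξ)] with x hx
        simp [hx, mul_div_assoc] }
  have hLnorm : ∀ ξ, ‖L ξ‖ = (eLpNorm ξ 2 (μ₁.restrict {y | r y ≠ 0})).toReal := by
    intro ξ
    rw [← eLpNorm_comp_div_sqrt hφ hr_meas hr_nonneg hRN (hmeas ξ)]
    exact Lp.norm_toLp _ (hmem ξ)
  have hbound : ∀ ξ, ‖L ξ‖ ≤ 1 * ‖ξ‖ := by
    intro ξ
    rw [hLnorm, one_mul, Lp.norm_def]
    exact ENNReal.toReal_mono (Lp.memLp ξ).2.ne (eLpNorm_mono_measure _ Measure.restrict_le_self)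
  have hcoe : ∀ ξ, (L ξ : X → ℂ) =ᵐ[μ] fun x => ξ (φ x) / (Real.sqrt (r (φ x)) : ℂ) :=
    fun ξ => (hmem ξ).coeFn_toLp
  have hs : MeasurableSet {y | r y ≠ 0} := (hr_meas (measurableSet_singleton 0)).compl
  refine ⟨L.mkContinuous 1 hbound, ?_, ?_, ?_, ?_, ?_⟩
  · intro ξ
    filter_upwards [hcoe ξ] with x hx
    rw [LinearMap.mkContinuous_apply, hx]
    split_ifs with h <;> simp [h]
  · intro ξ
    rw [LinearMap.mkContinuous_apply, hLnorm, toReal_eLpNorm_two_sq ((Lp.memLp ξ).restrict _)]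
  · intro ξ hξ
    rw [LinearMap.mkContinuous_apply, hLnorm, Lp.norm_def, ← eLpNorm_indicator_eq_eLpNorm_restrict hs]
    congr 1
    refine eLpNorm_congr_ae ?_
    filter_upwards [hξ] with y hy
    by_cases h : r y = 0
    · simp [h, hy h]
    · simp [h]
  · intro ξ hξ
    rw [LinearMap.mkContinuous_apply, ← norm_eq_zero, hLnorm,
      ← eLpNorm_indicator_eq_eLpNorm_restrict hs]
    have : Set.indicator {y | r y ≠ 0} (ξ : X₁ → ℂ) =ᵐ[μ₁] 0 := by
      filter_upwards [hξ] with y hy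
      by_cases h : r y = 0
      · simp [h]
      · simp [h, hy h]
    simp [eLpNorm_congr_ae this]
  · rintro ⟨Λ, -, hΛ0, -, -, ψ, hψ, hψφ⟩ η
    have hη : Measurable η := (Lp.stronglyMeasurable η).measurable
    have hae : ∀ᵐ x ∂μ, ψ (φ x) = x := by
      filter_upwards [measure_eq_zero_iff_ae_notMem.1 hΛ0] with x hx using hψφ x hx
    have hξ : MemLp (fun y => (Real.sqrt (r y) : ℂ) * η (ψ y)) 2 μ₁ := by
      refine ⟨Measurable.aestronglyMeasurable (by fun_prop), ?_⟩
      have : eLpNorm (fun y => (Real.sqrt (r y) : ℂ) * η (ψ y)) 2 μ₁ = eLpNorm η 2 μ := by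
        rw [eLpNorm_two_eq_lintegral, eLpNorm_two_eq_lintegral]
        congr 1
        calc _ = ∫⁻ y, ENNReal.ofReal (r y) * ‖η (ψ y)‖ₑ ^ 2 ∂μ₁ := by
              refine lintegral_congr fun y => ?_
              rw [enorm_mul, mul_pow, ofReal_eq_enorm_sqrt_sq (hr_nonneg y)]
          _ = ∫⁻ x, ‖η (ψ (φ x))‖ₑ ^ 2 ∂μ :=
              (lintegral_comp_eq_mul hφ hr_meas hRN (g := fun y => ‖η (ψ y)‖ₑ ^ 2)
                (by fun_prop)).symm
          _ = _ := lintegral_congr_ae (by filter_upwards [hae] with x hx; rw [hx])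
      rw [this]
      exact (Lp.memLp η).2
    refine ⟨hξ.toLp _, ?_⟩
    rw [LinearMap.mkContinuous_apply]
    refine Lp.ext ?_
    filter_upwards [hcoe (hξ.toLp _), hq.ae hξ.coeFn_toLp, hae,
      ae_density_comp_ne_zero hφ hr_meas hRN] with x h1 h2 h3 h4
    have h0 : (Real.sqrt (r (φ x)) : ℂ) ≠ 0 := by
      exact_mod_cast (Real.sqrt_pos.2 (lt_of_le_of_ne (hr_nonneg _) (Ne.symm h4))).ne'
    rw [h1, h2, h3, mul_div_cancel_left₀ _ h0]
end
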